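/- arXiv:1204.1622 — 3 statements merged into one kernel-verified Lean document; each statement's English description precedes it below -/
import Mathlib

section
/- Let K be a field of prime characteristic p, and let δ be the derivation of the polynomial ring K[x,y,z] determined on the generators by δ(x) = x^p − x, δ(y) = y^p − y, δ(z) = z^p − z. Then the p-fold iterate of δ equals δ itself as a linear endomorphism of K[x,y,z]; in particular δ is p-closed (δ^p = f·δ with f = 1). -/
open MvPolynomial

/-!
In characteristic `p` the middle terms of the Leibniz formula for `D^p (a * b)` vanish, so the
`p`-th iterate of a derivation `D` is again a derivation, and every derivation kills `a ^ p`.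
If `D a = a ^ p - a =: b`, then `D b = -b`, hence `D^p b = (-1) ^ p * b = -b`; as the derivation
`D^p` also satisfies `D^p b = -D^p a`, this gives `D^p a = b = D a`. A derivation of a polynomial
ring is determined by its values on the variables.
-/

theorem iterate_apply_of_apply_eq_neg {F A : Type*} [Ring A] [FunLike F A A]
    [AddMonoidHomClass F A A] {f : F} {a : A} (h : f a = -a) (n : ℕ) :
    f^[n] a = (-1) ^ n * a := by
  induction n with
  | zero => simp
  | succ n ih => rw [Function.iterate_succ_apply, h, iterate_map_neg, ih, pow_succ', neg_one_mul,
      neg_mul]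

section Iterate

open Finset.HasAntidiagonal (antidiagonal mem_antidiagonal)

variable {R A : Type*} [CommSemiring R] [CommSemiring A] [Algebra R A]

theorem derivation_iterate_mul (D : Derivation R A A) (n : ℕ) (a b : A) :
    D^[n] (a * b) =
      ∑ ij ∈ antidiagonal n, n.choose ij.1 • (D^[ij.1] a * D^[ij.2] b) := by
  induction n with
  | zero => simp
  | succ n ih =>
    rw [Finset.sum_antidiagonal_choose_succ_nsmul (fun i j => D^[i] a * D^[j] b) n,
      Function.iterate_succ_apply', ih, map_sum, ← Finset.sum_add_distrib]
    refine Finset.sum_congr rfl fun ij hij => ?_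
    rw [← Nat.choose_symm_of_eq_add (mem_antidiagonal.mp hij).symm, map_nsmul, D.leibniz,
      smul_eq_mul, smul_eq_mul, mul_comm (D^[ij.2] b), smul_add]
    simp only [Function.iterate_succ_apply']

variable (p : ℕ) [Fact p.Prime] [CharP A p]

theorem derivation_iterate_char_mul (D : Derivation R A A) (a b : A) :
    D^[p] (a * b) = a * D^[p] b + b * D^[p] a := by
  have hp : p.Prime := Fact.out
  have middle_eq_zero : ∀ ij ∈ antidiagonal p, ij ≠ (0, p) ∧ ij ≠ (p, 0) →
      p.choose ij.1 • (D^[ij.1] a * D^[ij.2] b) = 0 := by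
    rintro ⟨i, j⟩ hij ⟨ne_zero_left, ne_zero_right⟩
    have hsum : i + j = p := mem_antidiagonal.mp hij
    have hdvd : p ∣ p.choose i := hp.dvd_choose_self (by grind) (by grind)
    rw [nsmul_eq_mul, (CharP.cast_eq_zero_iff A p _).mpr hdvd, zero_mul]
  have ends_ne : (0, p) ≠ (p, 0) := fun h => hp.ne_zero (Prod.ext_iff.mp h).2
  rw [derivation_iterate_mul, Finset.sum_eq_add_of_mem (0, p) (p, 0) (by simp) (by simp)
    ends_ne middle_eq_zero]
  simp [mul_comm]

end Iterate

section CharP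

variable {R A : Type*} [CommSemiring R] [CommRing A] [Algebra R A]
variable (p : ℕ)

/-- The `p`-th power `D ^ p` of a derivation in characteristic `p`, bundled as a derivation; this is
the `p`-operation of the restricted Lie algebra of derivations of `A`. -/
def derivationPowChar [Fact p.Prime] [CharP A p] (D : Derivation R A A) : Derivation R A A :=
  Derivation.mk' ((D : A →ₗ[R] A) ^ p) fun a b => by
    simpa only [Module.End.pow_apply, smul_eq_mul, Derivation.coeFn_coe] using
      derivation_iterate_char_mul p D a b

theorem coe_derivationPowChar [Fact p.Prime] [CharP A p] (D : Derivation R A A) :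
    ⇑(derivationPowChar p D) = D^[p] :=
  Module.End.coe_pow (D : A →ₗ[R] A) p

theorem derivation_pow_char_sub_self [CharP A p] (D : Derivation R A A) (a : A) :
    D (a ^ p - a) = -D a := by
  rw [map_sub, D.leibniz_pow, nsmul_eq_mul, CharP.cast_eq_zero, zero_mul, zero_sub]

theorem derivation_iterate_char_eq_of_apply_eq_pow_sub_self [Fact p.Prime] [CharP A p]
    {D : Derivation R A A} {a : A} (ha : D a = a ^ p - a) :
    D^[p] a = D a := by
  have apply_eq_neg : D (D a) = -D a := by
    rw [← derivation_pow_char_sub_self p, ← ha]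
  have neg_iterate_eq : -D^[p] a = -D a := calc
    -D^[p] a = D^[p] (a ^ p - a) := by
      rw [← coe_derivationPowChar, derivation_pow_char_sub_self]
    _ = (-1) ^ p * D a := by rw [← ha, iterate_apply_of_apply_eq_neg apply_eq_neg]
    _ = -D a := by rw [neg_one_pow_char, neg_one_mul]
  exact neg_injective neg_iterate_eq

end CharP

theorem hirokado_derivation_p_closed_general {R σ : Type*} [CommRing R] (p : ℕ) [Fact p.Prime]
    [CharP R p] (δ : Derivation R (MvPolynomial σ R) (MvPolynomial σ R))
    (hδ : δ = mkDerivation R fun i => X i ^ p - X i) :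
    δ^[p] = δ := by
  have powChar_eq : derivationPowChar p δ = δ := derivation_ext fun i => by
    rw [coe_derivationPowChar]
    exact derivation_iterate_char_eq_of_apply_eq_pow_sub_self p (by rw [hδ, mkDerivation_X])
  rw [← coe_derivationPowChar, powChar_eq]

/-- Let `K` be a field of prime characteristic `p` and let `δ` be the derivation of
`K[x,y,z]` with `δ(x) = x^p - x`, `δ(y) = y^p - y`, `δ(z) = z^p - z` (the Hirokado
derivation).  Then the `p`-fold iterate of `δ` equals `δ` itself; in particular `δ`
is `p`-closed with `δ^p = 1 ⋅ δ`. -/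
theorem hirokado_derivation_p_closed
    {K : Type*} [Field K] (p : ℕ) (hp : p.Prime) [CharP K p]
    (δ : Derivation K (MvPolynomial (Fin 3) K) (MvPolynomial (Fin 3) K))
    (hδ : δ = MvPolynomial.mkDerivation K
      (fun i : Fin 3 => (X i : MvPolynomial (Fin 3) K) ^ p - X i)) :
    (⇑δ)^[p] = ⇑δ := by
  have : Fact p.Prime := ⟨hp⟩
  exact hirokado_derivation_p_closed_general p δ hδ
end

section
/- Let K be an algebraically closed field of prime characteristic p and let u, v ∈ K^4 be linearly independent, with Plücker coordinates p_{ij} := u_i v_j − u_j v_i. Then the 2-plane W = span{u,v} meets its Frobenius twist F^*W = span{u^{(p)}, v^{(p)}} nontrivially (W ∩ F^*W ≠ {0}) if and only if b(p, p^{(p)}) := p_{01}p_{23}^p − p_{02}p_{13}^p + p_{03}p_{12}^p + p_{23}p_{01}^p − p_{13}p_{02}^p + p_{12}p_{03}^p = 0. Thus the Deligne–Lusztig locus ℱ = {W ∈ Gr(2,4) : W ∩ F^*W ≠ 0} is cut out on the Plücker quadric by a form of degree p+1, so ℱ is a complete intersection of type (2, p+1) in ℙ^5. -/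
/-!
For linearly independent pairs `u, v` and `x, y`, the two spans meet nontrivially exactly when
`u, v, x, y` are linearly dependent, i.e. when the `4 × 4` determinant with these rows vanishes, and
Laplace expansion along the first two rows writes that determinant as the Plücker pairing. An
injective ring endomorphism such as the Frobenius preserves linear independence of coordinate
vectors and commutes with Plücker coordinates, so this applies to a plane and its twist.
-/

open Function Submodule

section PluckerCoordinates

variable {R S ι : Type*} [CommRing R] [CommRing S]

/-- The `(i, j)` Plücker coordinate of the plane spanned by `u` and `v`: the `2 × 2` minor on
columns `i` and `j`. It is defined for all `i` and `j`, as an alternating array. -/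
def pluckerCoord (u v : ι → R) (i j : ι) : R :=
  u i * v j - u j * v i

/-- The polar form of the Plücker quadric `P₀₁P₂₃ - P₀₂P₁₃ + P₀₃P₁₂`, which detects incidence of
lines in `ℙ³`. Only the entries above the diagonal are read. -/
def pluckerPairing (P Q : Fin 4 → Fin 4 → R) : R :=
  P 0 1 * Q 2 3 - P 0 2 * Q 1 3 + P 0 3 * Q 1 2
    + P 2 3 * Q 0 1 - P 1 3 * Q 0 2 + P 1 2 * Q 0 3

theorem pluckerCoord_map (σ : R →+* S) (u v : ι → R) (i j : ι) :
    pluckerCoord (σ ∘ u) (σ ∘ v) i j = σ (pluckerCoord u v i j) := by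
  simp [pluckerCoord]

theorem det_eq_pluckerPairing_rows (A : Matrix (Fin 4) (Fin 4) R) :
    A.det = pluckerPairing (pluckerCoord (A 0) (A 1)) (pluckerCoord (A 2) (A 3)) := by
  rw [Matrix.det_succ_row_zero, Fin.sum_univ_four]
  simp only [Matrix.det_fin_three, Matrix.submatrix_apply, Fin.succAbove, Fin.reduceSucc,
    Fin.reduceCastSucc, Fin.reduceLT, Fin.isValue, Fin.coe_ofNat_eq_mod, ↓reduceIte,
    pluckerPairing, pluckerCoord]
  ring

end PluckerCoordinates

section LinearIndependence

theorem linearIndependent_fin_append_iff {R M : Type*} [Ring R] [AddCommGroup M] [Module R M]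
    {m n : ℕ} (v : Fin m → M) (w : Fin n → M) :
    LinearIndependent R (Fin.append v w) ↔
      LinearIndependent R v ∧ LinearIndependent R w ∧
        Disjoint (span R (Set.range v)) (span R (Set.range w)) := by
  have inl_eq : (Fin.append v w ∘ finSumFinEquiv) ∘ Sum.inl = v := by ext; simp
  have inr_eq : (Fin.append v w ∘ finSumFinEquiv) ∘ Sum.inr = w := by ext; simp
  rw [← linearIndependent_equiv finSumFinEquiv, linearIndependent_sum, inl_eq, inr_eq]

theorem linearIndependent_ringHom_comp_iff {R S ι κ : Type*} [CommRing R] [CommRing S] [IsDomain S]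
    [Finite κ] {σ : R →+* S} (hσ : Injective σ) {v : ι → κ → R} :
    LinearIndependent S (fun i ↦ σ ∘ v i) ↔ LinearIndependent R v := by
  let := σ.toAlgebra
  have : FaithfulSMul R S := (faithfulSMul_iff_algebraMap_injective R S).2 hσ
  exact linearIndependent_algebraMap_comp_iff

end LinearIndependence

section PlanesInFourSpace

variable {R : Type*} [CommRing R] [IsDomain R] {u v x y : Fin 4 → R}

theorem span_pair_inf_ne_bot_iff_pluckerPairing_eq_zero (huv : LinearIndependent R ![u, v])
    (hxy : LinearIndependent R ![x, y]) :
    span R {u, v} ⊓ span R {x, y} ≠ ⊥ ↔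
      pluckerPairing (pluckerCoord u v) (pluckerCoord x y) = 0 := by
  have append_iff : LinearIndependent R (Fin.append ![u, v] ![x, y]) ↔
      Disjoint (span R {u, v}) (span R {x, y}) := by
    simpa only [Matrix.range_cons_cons_empty, huv, hxy, true_and] using
      linearIndependent_fin_append_iff (R := R) ![u, v] ![x, y]
  let A : Matrix (Fin 4) (Fin 4) R := Matrix.of (Fin.append ![u, v] ![x, y])
  calc span R {u, v} ⊓ span R {x, y} ≠ ⊥
      ↔ ¬Disjoint (span R {u, v}) (span R {x, y}) := disjoint_iff.not.symm
    _ ↔ ¬LinearIndependent R A.row := append_iff.not.symm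
    _ ↔ A.det = 0 := by
      rw [Matrix.linearIndependent_row_iff, Matrix.nonsingular_iff_det_ne_zero, not_not]
    _ ↔ pluckerPairing (pluckerCoord u v) (pluckerCoord x y) = 0 := by
      rw [det_eq_pluckerPairing_rows]
      rfl

theorem deligne_lusztig_locus_eqn_general {σ : R →+* R} (hσ : Injective σ)
    (huv : LinearIndependent R ![u, v]) :
    span R {u, v} ⊓ span R {σ ∘ u, σ ∘ v} ≠ ⊥ ↔
      pluckerPairing (pluckerCoord u v) (fun i j ↦ σ (pluckerCoord u v i j)) = 0 := by
  have pair_eq : (fun k ↦ σ ∘ ![u, v] k) = ![σ ∘ u, σ ∘ v] := by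
    ext k : 1
    fin_cases k <;> rfl
  have huv_map : LinearIndependent R ![σ ∘ u, σ ∘ v] :=
    pair_eq ▸ (linearIndependent_ringHom_comp_iff hσ).2 huv
  simp only [span_pair_inf_ne_bot_iff_pluckerPairing_eq_zero huv huv_map, ← pluckerCoord_map]

end PlanesInFourSpace

/-- Let `K` be an algebraically closed field of prime characteristic `p` and let
`u, v : Fin 4 → K` be linearly independent, with Plücker coordinates
`P i j = u i * v j - u j * v i`.  The 2-plane `W = span {u, v}` meets its Frobenius
twist `F^*W = span {u^(p), v^(p)}` nontrivially if and only if the degree-`(p+1)`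
form `b(P, P^(p)) = P01*P23^p - P02*P13^p + P03*P12^p + P23*P01^p - P13*P02^p
+ P12*P03^p` vanishes.  Thus the Deligne–Lusztig locus `ℱ` is cut out on the
Plücker quadric by a form of degree `p + 1`, i.e. `ℱ` is a complete intersection
of type `(2, p+1)` in `ℙ^5`. -/
theorem deligne_lusztig_locus_eqn
    {K : Type*} [Field K] [IsAlgClosed K] (p : ℕ) (hp : p.Prime) [CharP K p]
    (u v : Fin 4 → K) (huv : LinearIndependent K ![u, v])
    (P : Fin 4 → Fin 4 → K) (hP : ∀ i j, P i j = u i * v j - u j * v i) :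
    Submodule.span K {u, v} ⊓
        Submodule.span K {(fun i => u i ^ p), (fun i => v i ^ p)} ≠ ⊥ ↔
      P 0 1 * P 2 3 ^ p - P 0 2 * P 1 3 ^ p + P 0 3 * P 1 2 ^ p
        + P 2 3 * P 0 1 ^ p - P 1 3 * P 0 2 ^ p + P 1 2 * P 0 3 ^ p = 0 := by
  have : Fact p.Prime := ⟨hp⟩
  obtain rfl : P = pluckerCoord u v := funext₂ hP
  simpa only [comp_def, frobenius_def, pluckerPairing] using
    deligne_lusztig_locus_eqn_general (frobenius_inj K p) huv
end

section
/- Let K be a field of prime characteristic p. On the polynomial ring K[X_1, X_2, X_3, X_4], let D be the derivation determined by D(X_i) = X_i^p for i = 1, ..., 4. Then the p-fold iterate of D is zero as a linear endomorphism of K[X_1,...,X_4]: D^p = 0. -/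
open MvPolynomial

/-!
If `D (D b) = 0`, the Leibniz expansion of `D^n (a * b)` stops after two terms:
`D^n (a * b) = D^n a * b + n • (D^(n-1) a * D b)`. When `n = 0` in the ring, `D^n` therefore
commutes with multiplication by `b`. The elements with this property form a subalgebra, and the
variables lie in it because `D (X i ^ n) = 0`; so `D^n` is multiplication by `D^n 1 = 0`.
-/

section Iterate

variable {R A : Type*} [CommSemiring R] [CommSemiring A] [Algebra R A] (D : Derivation R A A)

theorem derivation_pow_eq_zero_of_natCast_eq_zero {n : ℕ} (hn : (n : A) = 0) (a : A) :
    D (a ^ n) = 0 := by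
  rw [D.leibniz_pow, nsmul_eq_mul, hn, zero_mul]

theorem derivation_iterate_one {n : ℕ} (hn : n ≠ 0) : D^[n] 1 = 0 := by
  obtain ⟨m, rfl⟩ := Nat.exists_eq_succ_of_ne_zero hn
  rw [Function.iterate_succ_apply, D.map_one_eq_zero, iterate_map_zero]

theorem derivation_iterate_succ_mul {b : A} (hb : D (D b) = 0) (n : ℕ) (a : A) :
    D^[n + 1] (a * b) = D^[n + 1] a * b + (n + 1) • (D^[n] a * D b) := by
  induction n with
  | zero =>
    simp only [zero_add, Function.iterate_one, Function.iterate_zero_apply, one_smul, D.leibniz,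
      smul_eq_mul]
    ring
  | succ n ih =>
    have map_leading_term : D (D^[n + 1] a * b) = D^[n + 2] a * b + D^[n + 1] a * D b := by
      rw [D.leibniz, ← Function.iterate_succ_apply' D, smul_eq_mul, smul_eq_mul]
      ring
    have map_correction_term : D (D^[n] a * D b) = D^[n + 1] a * D b := by
      rw [D.leibniz, hb, smul_zero, zero_add, smul_eq_mul, mul_comm, Function.iterate_succ_apply']
    rw [Function.iterate_succ_apply', ih, map_add, map_nsmul, map_leading_term,
      map_correction_term, add_assoc, ← succ_nsmul']

theorem derivation_iterate_mul_of_natCast_eq_zero {n : ℕ} (hn : (n : A) = 0) {b : A}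
    (hb : D (D b) = 0) (a : A) : D^[n] (a * b) = D^[n] a * b := by
  cases n with
  | zero => rfl
  | succ m => rw [derivation_iterate_succ_mul D hb, nsmul_eq_mul, hn, zero_mul, add_zero]

theorem derivation_iterate_mul_of_mem_adjoin {n : ℕ} (hn : (n : A) = 0) {s : Set A}
    (hs : ∀ x ∈ s, D (D x) = 0) {b : A} (hb : b ∈ Algebra.adjoin R s) (a : A) :
    D^[n] (a * b) = D^[n] a * b := by
  induction hb using Algebra.adjoin_induction generalizing a with
  | mem x hx => exact derivation_iterate_mul_of_natCast_eq_zero D hn (hs x hx) a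
  | algebraMap r =>
    have hr : D (D (algebraMap R A r)) = 0 := by rw [D.map_algebraMap, map_zero]
    exact derivation_iterate_mul_of_natCast_eq_zero D hn hr a
  | add x y _ _ hx hy => rw [mul_add, iterate_map_add, hx, hy, mul_add]
  | mul x y _ _ hx hy => rw [← mul_assoc, hy, hx, mul_assoc]

theorem derivation_iterate_eq_zero_of_adjoin_eq_top {n : ℕ} (hn₀ : n ≠ 0) (hn : (n : A) = 0)
    {s : Set A} (hs : ∀ x ∈ s, D (D x) = 0) (hs_top : Algebra.adjoin R s = ⊤) :
    D^[n] = fun _ => 0 := by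
  funext b
  have hb : b ∈ Algebra.adjoin R s := hs_top ▸ Algebra.mem_top
  calc D^[n] b = D^[n] (1 * b) := by rw [one_mul]
    _ = D^[n] 1 * b := derivation_iterate_mul_of_mem_adjoin D hn hs hb 1
    _ = 0 := by rw [derivation_iterate_one D hn₀, zero_mul]

end Iterate

theorem hirokado_cone_derivation_pth_power_zero_general {R σ : Type*} [CommSemiring R] {n : ℕ}
    (hn₀ : n ≠ 0) (hn : (n : R) = 0) :
    (mkDerivation R fun i : σ => (X i : MvPolynomial σ R) ^ n)^[n] = fun _ => 0 := by
  have hn' : (n : MvPolynomial σ R) = 0 := by rw [← map_natCast C, hn, map_zero]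
  refine derivation_iterate_eq_zero_of_adjoin_eq_top _ hn₀ hn' ?_ adjoin_range_X
  rintro _ ⟨i, rfl⟩
  rw [mkDerivation_X, derivation_pow_eq_zero_of_natCast_eq_zero _ hn']

/-- Let `K` be a field of prime characteristic `p`.  The derivation `D` on
`K[X₁,...,X₄]` determined by `D(Xᵢ) = Xᵢ^p` satisfies `D^p = 0` as a linear
endomorphism; this is closure under `p`-th powers for the generator `D` of the
foliation `⟨Σ Xᵢ^p ∂/∂Xᵢ, Σ Xᵢ ∂/∂Xᵢ⟩`. -/
theorem hirokado_cone_derivation_pth_power_zero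
    {K : Type*} [Field K] (p : ℕ) (hp : p.Prime) [CharP K p]
    (D : Derivation K (MvPolynomial (Fin 4) K) (MvPolynomial (Fin 4) K))
    (hD : D = MvPolynomial.mkDerivation K (fun i : Fin 4 => (X i : MvPolynomial (Fin 4) K) ^ p)) :
    (⇑D)^[p] = fun _ => 0 := by
  subst hD
  exact hirokado_cone_derivation_pth_power_zero_general hp.ne_zero (CharP.cast_eq_zero K p)
end
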